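/- Let U, V', X, Y, Z, W' be countable types, let γ : U → V' → ℝ, α : X → Y → ℝ, β : Z → W' → ℝ all take values in [0,1], and let f : U × X → PMF Z and g : V' × Y → PMF W'. Suppose Wβ(f(u, x), g(v, y)) ≤ γ(u, v) + α(x, y) for all u ∈ U, x ∈ X, v ∈ V', y ∈ Y. Then for all u ∈ U, v ∈ V', μ ∈ PMF X, ν ∈ PMF Y: Wβ(μ.bind (fun x => f(u, x)), ν.bind (fun y => g(v, y))) ≤ γ(u, v) + Wα(μ, ν). (This is the strong lax bind condition for the Wasserstein lifting of the distribution monad.) -/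

import Mathlib

open scoped ENNReal

/-- `ω` is a coupling of `μ` and `ν`: a joint distribution with marginals `μ` and `ν`. -/
def IsCoupling {X Y : Type*} (μ : PMF X) (ν : PMF Y) (ω : PMF (X × Y)) : Prop :=
  (∀ x, ∑' y, ω (x, y) = μ x) ∧ ∀ y, ∑' x, ω (x, y) = ν y

/-- The transport cost `∑_{x,y} α(x,y) · ω(x,y)` of a joint distribution `ω`. -/
noncomputable def Wcost {X Y : Type*} (α : X → Y → ℝ) (ω : PMF (X × Y)) : ℝ :=
  ∑' p : X × Y, α p.1 p.2 * (ω p).toReal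

/-- The Wasserstein lifting `W α(μ, ν) = inf { Wcost α ω | ω coupling of μ, ν }`. -/
noncomputable def Wass {X Y : Type*} (α : X → Y → ℝ) (μ : PMF X) (ν : PMF Y) : ℝ :=
  sInf (Wcost α '' {ω | IsCoupling μ ν ω})

/-!
Glue couplings: a coupling `ω` of `μ` and `ν` together with couplings `κ (x, y)` of `f x` and `g y`
yields the coupling `ω.bind κ` of `μ.bind f` and `ν.bind g`, and its cost is the `ω`-average of the
costs of the `κ (x, y)`. Choosing `ω` and every `κ (x, y)` within `ε / 2` of the infimum bounds
this average by `c + W α(μ, ν) + ε` when `W β(f x, g y) ≤ c + α(x, y)` for all `x` and `y`.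
-/

section Coupling

variable {X Y Z W : Type*} {μ : PMF X} {ν : PMF Y} {ω : PMF (X × Y)}

theorem isCoupling_iff_map_eq : IsCoupling μ ν ω ↔ ω.map Prod.fst = μ ∧ ω.map Prod.snd = ν := by
  classical
  have map_fst_apply (x : X) : ω.map Prod.fst x = ∑' y, ω (x, y) := by
    rw [PMF.map_apply, ENNReal.tsum_prod', tsum_eq_single x fun x' hx' => by simp [hx'.symm]]
    simp
  have map_snd_apply (y : Y) : ω.map Prod.snd y = ∑' x, ω (x, y) := by
    rw [PMF.map_apply, ENNReal.tsum_prod', ENNReal.tsum_comm,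
      tsum_eq_single y fun y' hy' => by simp [hy'.symm]]
    simp
  simp only [IsCoupling, PMF.ext_iff, map_fst_apply, map_snd_apply]

theorem exists_isCoupling (μ : PMF X) (ν : PMF Y) : ∃ ω, IsCoupling μ ν ω := by
  refine ⟨μ.bind fun x => ν.map (Prod.mk x), isCoupling_iff_map_eq.2 ⟨?_, ?_⟩⟩
  · have map_fst (x : X) : (ν.map (Prod.mk x)).map Prod.fst = PMF.pure x := by
      rw [PMF.map_comp]
      exact ν.map_const x
    simp only [PMF.map_bind, map_fst, PMF.bind_pure]
  · have map_snd (x : X) : (ν.map (Prod.mk x)).map Prod.snd = ν := by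
      rw [PMF.map_comp]
      exact ν.map_id
    simp only [PMF.map_bind, map_snd, PMF.bind_const]

theorem IsCoupling.bind {f : X → PMF Z} {g : Y → PMF W} {κ : X × Y → PMF (Z × W)}
    (hω : IsCoupling μ ν ω) (hκ : ∀ p, IsCoupling (f p.1) (g p.2) (κ p)) :
    IsCoupling (μ.bind f) (ν.bind g) (ω.bind κ) := by
  simp only [isCoupling_iff_map_eq] at hω hκ ⊢
  obtain ⟨rfl, rfl⟩ := hω
  simp only [PMF.map_bind, PMF.bind_map, hκ, Function.comp_def, and_self]

end Coupling

section Expectation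

variable {P Q : Type*}

theorem hasSum_pmf_toReal (ω : PMF P) : HasSum (fun p => (ω p).toReal) 1 := by
  have hasSum_tsum := ENNReal.hasSum_toReal ω.tsum_coe_ne_top
  rwa [← ENNReal.tsum_toReal_eq ω.apply_ne_top, ω.tsum_coe, ENNReal.toReal_one] at hasSum_tsum

theorem summable_mul_pmf_toReal {φ : P → ℝ} {C : ℝ} (hφ : ∀ p, |φ p| ≤ C) (ω : PMF P) :
    Summable fun p => φ p * (ω p).toReal := by
  refine ((hasSum_pmf_toReal ω).summable.mul_left C).of_norm_bounded fun p => ?_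
  rw [norm_mul, Real.norm_eq_abs, Real.norm_of_nonneg ENNReal.toReal_nonneg]
  gcongr
  exact hφ p

theorem toReal_pmf_bind_apply (ω : PMF P) (κ : P → PMF Q) (q : Q) :
    (ω.bind κ q).toReal = ∑' p, (ω p).toReal * (κ p q).toReal := by
  rw [PMF.bind_apply, ENNReal.tsum_toReal_eq fun p =>
    ENNReal.mul_ne_top (ω.apply_ne_top p) ((κ p).apply_ne_top q)]
  simp only [ENNReal.toReal_mul]

theorem summable_pmf_toReal_mul_toReal (ω : PMF P) (κ : P → PMF Q) :
    Summable fun r : P × Q => (ω r.1).toReal * (κ r.1 r.2).toReal := by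
  have tsum_joint : ∑' r : P × Q, ω r.1 * κ r.1 r.2 = 1 := by
    simp only [ENNReal.tsum_prod', ENNReal.tsum_mul_left, PMF.tsum_coe, mul_one]
  simpa only [ENNReal.toReal_mul] using
    ENNReal.summable_toReal (tsum_joint.trans_ne ENNReal.one_ne_top)

theorem tsum_mul_pmf_bind_toReal {φ : Q → ℝ} {C : ℝ} (hφ : ∀ q, |φ q| ≤ C) (ω : PMF P)
    (κ : P → PMF Q) :
    ∑' q, φ q * (ω.bind κ q).toReal = ∑' p, (∑' q, φ q * (κ p q).toReal) * (ω p).toReal := by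
  have summable_joint :
      Summable fun r : P × Q => φ r.2 * ((ω r.1).toReal * (κ r.1 r.2).toReal) := by
    refine ((summable_pmf_toReal_mul_toReal ω κ).mul_left C).of_norm_bounded fun r => ?_
    rw [norm_mul, Real.norm_eq_abs, Real.norm_of_nonneg (by positivity)]
    gcongr
    exact hφ r.2
  calc ∑' q, φ q * (ω.bind κ q).toReal
      = ∑' q, ∑' p, φ q * ((ω p).toReal * (κ p q).toReal) := by
        simp only [toReal_pmf_bind_apply, tsum_mul_left]
    _ = ∑' p, ∑' q, φ q * ((ω p).toReal * (κ p q).toReal) := summable_joint.tsum_comm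
    _ = ∑' p, (∑' q, φ q * (κ p q).toReal) * (ω p).toReal := by
        simp only [← tsum_mul_right, mul_assoc, mul_comm (ω _).toReal]

end Expectation

section Cost

variable {X Y Z W : Type*} {α α' : X → Y → ℝ} {A A' : ℝ}

theorem wcost_const (r : ℝ) (ω : PMF (X × Y)) : Wcost (fun _ _ => r) ω = r := by
  rw [Wcost, tsum_mul_left, (hasSum_pmf_toReal ω).tsum_eq, mul_one]

theorem wcost_mono (hα : ∀ x y, |α x y| ≤ A) (hα' : ∀ x y, |α' x y| ≤ A')
    (hle : ∀ x y, α x y ≤ α' x y) (ω : PMF (X × Y)) : Wcost α ω ≤ Wcost α' ω :=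
  (summable_mul_pmf_toReal (fun p : X × Y => hα p.1 p.2) ω).tsum_le_tsum
    (fun p => mul_le_mul_of_nonneg_right (hle p.1 p.2) ENNReal.toReal_nonneg)
    (summable_mul_pmf_toReal (fun p : X × Y => hα' p.1 p.2) ω)

theorem abs_wcost_le (hα : ∀ x y, |α x y| ≤ A) (ω : PMF (X × Y)) : |Wcost α ω| ≤ A := by
  refine abs_le.2 ⟨?_, ?_⟩
  · calc -A = Wcost (fun _ _ => -A) ω := (wcost_const (-A) ω).symm
      _ ≤ Wcost α ω := wcost_mono (fun _ _ => le_rfl) hα (fun x y => neg_le_of_abs_le (hα x y)) ω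
  · calc Wcost α ω ≤ Wcost (fun _ _ => A) ω :=
          wcost_mono hα (fun _ _ => le_rfl) (fun x y => le_of_abs_le (hα x y)) ω
      _ = A := wcost_const A ω

theorem wcost_add (hα : ∀ x y, |α x y| ≤ A) (hα' : ∀ x y, |α' x y| ≤ A') (ω : PMF (X × Y)) :
    Wcost (fun x y => α x y + α' x y) ω = Wcost α ω + Wcost α' ω := by
  simp only [Wcost, add_mul]
  exact (summable_mul_pmf_toReal (fun p : X × Y => hα p.1 p.2) ω).tsum_add
    (summable_mul_pmf_toReal (fun p : X × Y => hα' p.1 p.2) ω)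

theorem wcost_bind {β : Z → W → ℝ} {B : ℝ} (hβ : ∀ z w, |β z w| ≤ B) (ω : PMF (X × Y))
    (κ : X × Y → PMF (Z × W)) :
    Wcost β (ω.bind κ) = Wcost (fun x y => Wcost β (κ (x, y))) ω :=
  tsum_mul_pmf_bind_toReal (fun q : Z × W => hβ q.1 q.2) ω κ

end Cost

section Lifting

variable {X Y : Type*} {α : X → Y → ℝ} {μ : PMF X} {ν : PMF Y}

theorem IsCoupling.wass_le_wcost {ω : PMF (X × Y)} {A : ℝ} (hω : IsCoupling μ ν ω)
    (hα : ∀ x y, |α x y| ≤ A) : Wass α μ ν ≤ Wcost α ω := by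
  refine csInf_le ⟨-A, ?_⟩ ⟨ω, hω, rfl⟩
  rintro _ ⟨ω', -, rfl⟩
  exact neg_le_of_abs_le (abs_wcost_le hα ω')

theorem exists_isCoupling_wcost_lt {r : ℝ} (hr : Wass α μ ν < r) :
    ∃ ω, IsCoupling μ ν ω ∧ Wcost α ω < r := by
  have costs_nonempty : (Wcost α '' {ω | IsCoupling μ ν ω}).Nonempty :=
    Set.Nonempty.image _ (exists_isCoupling μ ν)
  obtain ⟨_, ⟨ω, hω, rfl⟩, hlt⟩ := exists_lt_of_csInf_lt costs_nonempty hr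
  exact ⟨ω, hω, hlt⟩

end Lifting

theorem wasserstein_strong_lax_bind_general {X Y Z W : Type*} {α : X → Y → ℝ} {β : Z → W → ℝ}
    {A B c : ℝ} (hα : ∀ x y, |α x y| ≤ A) (hβ : ∀ z w, |β z w| ≤ B)
    {f : X → PMF Z} {g : Y → PMF W} (h : ∀ x y, Wass β (f x) (g y) ≤ c + α x y)
    (μ : PMF X) (ν : PMF Y) :
    Wass β (μ.bind f) (ν.bind g) ≤ c + Wass α μ ν := by
  refine le_of_forall_pos_le_add fun ε hε => ?_
  obtain ⟨ω, hω, hω_cost⟩ : ∃ ω, IsCoupling μ ν ω ∧ Wcost α ω < Wass α μ ν + ε / 2 :=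
    exists_isCoupling_wcost_lt (by linarith)
  have near_optimal (p : X × Y) : ∃ κ, IsCoupling (f p.1) (g p.2) κ ∧
      Wcost β κ < c + ε / 2 + α p.1 p.2 :=
    exists_isCoupling_wcost_lt (by linarith [h p.1 p.2])
  choose κ hκ hκ_cost using near_optimal
  have shifted_bound (x : X) (y : Y) : |c + ε / 2 + α x y| ≤ |c + ε / 2| + A :=
    (abs_add_le _ _).trans (by gcongr; exact hα x y)
  calc Wass β (μ.bind f) (ν.bind g)
      ≤ Wcost β (ω.bind κ) := (hω.bind hκ).wass_le_wcost hβ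
    _ = Wcost (fun x y => Wcost β (κ (x, y))) ω := wcost_bind hβ ω κ
    _ ≤ Wcost (fun x y => c + ε / 2 + α x y) ω :=
        wcost_mono (fun _ _ => abs_wcost_le hβ _) shifted_bound (fun x y => (hκ_cost (x, y)).le) ω
    _ = c + ε / 2 + Wcost α ω := by
        rw [wcost_add (fun _ _ => le_rfl) hα, wcost_const]
    _ ≤ c + Wass α μ ν + ε := by linarith

/-- the strong lax bind condition for the Wasserstein lifting of the
distribution monad. -/
theorem wasserstein_strong_lax_bind
    {U V' X Y Z W' : Type*} [Countable U] [Countable V'] [Countable X] [Countable Y]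
    [Countable Z] [Countable W']
    (γ : U → V' → ℝ) (α : X → Y → ℝ) (β : Z → W' → ℝ)
    (hγ : ∀ u v, γ u v ∈ Set.Icc (0 : ℝ) 1)
    (hα : ∀ x y, α x y ∈ Set.Icc (0 : ℝ) 1)
    (hβ : ∀ z w, β z w ∈ Set.Icc (0 : ℝ) 1)
    (f : U × X → PMF Z) (g : V' × Y → PMF W')
    (h : ∀ u x v y, Wass β (f (u, x)) (g (v, y)) ≤ γ u v + α x y) :
    ∀ (u : U) (v : V') (μ : PMF X) (ν : PMF Y),
      Wass β (μ.bind fun x => f (u, x)) (ν.bind fun y => g (v, y)) ≤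
        γ u v + Wass α μ ν := by
  have abs_le_one {r : ℝ} (hr : r ∈ Set.Icc (0 : ℝ) 1) : |r| ≤ 1 :=
    (abs_of_nonneg hr.1).trans_le hr.2
  exact fun u v => wasserstein_strong_lax_bind_general (fun x y => abs_le_one (hα x y))
    (fun z w => abs_le_one (hβ z w)) fun x y => h u x v y
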